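/- Let m ∈ ℕ with m ≥ 1, let h : ℕ → ℕ be a polynomial with coefficients in ℕ and zero constant term, let a₁,…,a_m ∈ ℕ, let p be a minimal idempotent ultrafilter on ℕ, and let A ∈ h̃(a₁·p + ⋯ + a_m·p), where h̃ denotes the pushforward of ultrafilters along h. Then for every T ∈ 𝒫_f(ℙ) there exist functions α : 𝒫_f(ℕ^ℕ) → ℕ and H : 𝒫_f(ℕ^ℕ) → 𝒫_f(ℕ) such that (1) whenever F ⊊ G in 𝒫_f(ℕ^ℕ), max H(F) < min H(G), and (2) whenever G₁ ⊊ G₂ ⊊ ⋯ is an infinite strictly increasing chain in 𝒫_f(ℕ^ℕ), f_i ∈ G_i for each i ∈ ℕ, P₁,…,P_m ∈ T, and β₁ < ⋯ < β_m are in 𝒫_f(ℕ), then h(Σ_{l=1}^m a_l·(Σ_{i∈β_l}α(G_i) + P_l(Σ_{i∈β_l}Σ_{t∈H(G_i)}f_i(t)))) ∈ A. -/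

import Mathlib

namespace MultiCST

/-- The sum `p + q` of ultrafilters on ℕ: `A ∈ p + q` iff `{x : {y : x+y ∈ A} ∈ q} ∈ p`. -/
def uAdd (p q : Ultrafilter ℕ) : Ultrafilter ℕ :=
  p.bind fun x => q.map fun y => x + y

/-- `A ⊆ ℕ` is a J-set. -/
def IsJSet (A : Set ℕ) : Prop :=
  ∀ F : Finset (ℕ → ℕ), F.Nonempty →
    ∃ (a : ℕ) (β : Finset ℕ), β.Nonempty ∧ ∀ f ∈ F, a + ∑ t ∈ β, f t ∈ A

/-- `p ∈ 𝒥`: every member of `p` is a J-set. -/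
def MemJ (p : Ultrafilter ℕ) : Prop := ∀ A : Set ℕ, A ∈ p → IsJSet A

/-- `p` is an idempotent ultrafilter. -/
def IdempotentUF (p : Ultrafilter ℕ) : Prop := uAdd p p = p

/-- `p` is a minimal idempotent ultrafilter. -/
def IsMinimalIdempotent (p : Ultrafilter ℕ) : Prop :=
  IdempotentUF p ∧
    ∀ q : Ultrafilter ℕ, IdempotentUF q → uAdd q p = q → uAdd p q = q → q = p

/-- Tensor product `⊗_{i=1}^m p_i` of ultrafilters on ℕ, as an ultrafilter on `Fin m → ℕ`. -/
def tensor : ∀ m : ℕ, (Fin m → Ultrafilter ℕ) → Ultrafilter (Fin m → ℕ)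
  | 0, _ => pure fun i => i.elim0
  | m + 1, p =>
      (p 0).bind fun x => (tensor m fun i => p i.succ).map fun v => Fin.cons x v

/-- `f : ℕ → ℕ` is (given by) a polynomial with coefficients in ℕ and zero constant term. -/
def IsPolyZeroConst (f : ℕ → ℕ) : Prop :=
  ∃ P : Polynomial ℕ, P.coeff 0 = 0 ∧ ∀ x, f x = P.eval x

/-- The linear combination `a₁·p₁ + a₂·p₂ + ⋯ + a_m·p_m` of ultrafilters on ℕ. -/
def linComb : ∀ m : ℕ, (Fin m → ℕ) → (Fin m → Ultrafilter ℕ) → Ultrafilter ℕ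
  | 0, _, _ => pure 0
  | m + 1, a, p =>
      uAdd ((p 0).map fun x => a 0 * x)
        (linComb m (fun i => a i.succ) fun i => p i.succ)

section PET
variable {M G : Type*} [AddCommMonoid M] [AddCommGroup G]

/-- derivative-like shift -/
def Dv (v : M) (q : M → G) : M → G := fun u => q (v + u) - q v

/-- polynomial maps of degree at most `d` vanishing at zero -/
def PD : ℕ → (M → G) → Prop
  | 0, q => q = 0
  | d + 1, q => ∀ v, PD d (fun u => q (v + u) - q v - q u)

lemma PD_zero (d : ℕ) : PD d (0 : M → G) := by
  induction d with
  | zero => rfl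
  | succ d ih =>
    intro v
    convert ih using 1
    funext u; simp

lemma PD_add (d : ℕ) : ∀ {q r : M → G}, PD d q → PD d r → PD d (q + r) := by
  induction d with
  | zero => intro q r hq hr; simp only [PD] at *; simp [hq, hr]
  | succ d ih =>
    intro q r hq hr v
    convert ih (hq v) (hr v) using 1
    funext u; simp only [Pi.add_apply]; abel

lemma PD_neg (d : ℕ) : ∀ {q : M → G}, PD d q → PD d (-q) := by
  induction d with
  | zero => intro q hq; simp only [PD] at *; simp [hq]
  | succ d ih =>
    intro q hq v
    convert ih (hq v) using 1
    funext u; simp only [Pi.neg_apply]; abel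

lemma PD_sub (d : ℕ) {q r : M → G} (hq : PD d q) (hr : PD d r) : PD d (q - r) := by
  rw [sub_eq_add_neg]; exact PD_add d hq (PD_neg d hr)

lemma PD_succ (d : ℕ) : ∀ {q : M → G}, PD d q → PD (d + 1) q := by
  induction d with
  | zero =>
    intro q hq v
    simp only [PD] at *; subst hq; funext u; simp
  | succ d ih =>
    intro q hq v
    exact ih (hq v)

lemma PD_mono {d e : ℕ} (h : d ≤ e) {q : M → G} (hq : PD d q) : PD e q := by
  induction h with
  | refl => exact hq
  | step _ ih => exact PD_succ _ ih

lemma PD_apply_zero (d : ℕ) : ∀ {q : M → G}, PD d q → q 0 = 0 := by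
  induction d with
  | zero => intro q hq; simp only [PD] at *; simp [hq]
  | succ d ih =>
    intro q hq
    have := ih (hq 0)
    simpa using this

lemma PD_Dv_sub (d : ℕ) {q : M → G} (hq : PD (d + 1) q) (v : M) : PD d (Dv v q - q) := hq v

lemma PD_Dv (d : ℕ) {q : M → G} (hq : PD d q) (v : M) : PD d (Dv v q) := by
  cases d with
  | zero => simp only [PD] at *; subst hq; funext u; simp [Dv]
  | succ d =>
    have := PD_add _ (PD_succ _ (PD_Dv_sub d hq v)) hq
    simpa using this

lemma PD_comp {M' : Type*} [AddCommMonoid M'] (g : M' →+ M) (d : ℕ) :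
    ∀ {q : M → G}, PD d q → PD d (fun u => q (g u)) := by
  induction d with
  | zero => intro q hq; simp only [PD] at *; subst hq; rfl
  | succ d ih =>
    intro q hq v
    have := ih (hq (g v))
    simpa [map_add] using this

lemma PD_finset_sum {ι : Type*} (d : ℕ) (s : Finset ι) (q : ι → M → G)
    (hq : ∀ i ∈ s, PD d (q i)) : PD d (∑ i ∈ s, q i) := by
  classical
  induction s using Finset.induction_on with
  | empty => simpa using PD_zero d
  | insert a s ha ih =>
    rw [Finset.sum_insert ha]
    exact PD_add d (hq a (by simp)) (ih fun i hi => hq i (by simp [hi]))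

lemma PD_zsmul (d : ℕ) (c : ℤ) : ∀ {q : M → G}, PD d q → PD d (fun u => c • q u) := by
  induction d with
  | zero => intro q hq; simp only [PD] at *; subst hq; funext u; simp
  | succ d ih =>
    intro q hq v
    convert ih (hq v) using 1
    funext u; simp only [smul_sub]

lemma PD_pow (k : ℕ) : PD (k + 1) (fun n : ℕ => (n : ℤ) ^ (k + 1)) := by
  induction k using Nat.strong_induction_on with
  | _ k ih =>
    intro v
    have : (fun u : ℕ => (((v + u : ℕ) : ℤ)) ^ (k + 1) - (v : ℤ) ^ (k + 1) - (u : ℤ) ^ (k + 1))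
        = ∑ j ∈ Finset.range k, (fun u : ℕ =>
          ((v : ℤ) ^ (k - j) * ((k + 1).choose (j + 1) : ℤ)) • (u : ℤ) ^ (j + 1)) := by
      funext u
      push_cast
      rw [add_comm (v : ℤ), add_pow, Finset.sum_range_succ, Finset.sum_range_succ']
      simp only [Finset.sum_apply, smul_eq_mul]
      have e : ∑ j ∈ Finset.range k, (u : ℤ) ^ (j + 1) * (v : ℤ) ^ (k + 1 - (j + 1)) *
          ((k + 1).choose (j + 1) : ℤ) = ∑ j ∈ Finset.range k,
          (v : ℤ) ^ (k - j) * ((k + 1).choose (j + 1) : ℤ) * (u : ℤ) ^ (j + 1) := by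
        refine Finset.sum_congr rfl fun j _ => ?_
        rw [Nat.add_sub_add_right]
        ring
      rw [e]
      simp only [pow_zero, Nat.sub_zero, Nat.sub_self, Nat.choose_self, Nat.choose_zero_right,
        Nat.cast_one, mul_one, one_mul]
      abel
    rw [this]
    refine PD_finset_sum _ _ _ fun j hj => PD_zsmul _ _ ?_
    have hj := Finset.mem_range.1 hj
    exact PD_mono (by omega) (ih j hj)

lemma PD_poly (P : Polynomial ℕ) (h0 : P.coeff 0 = 0) :
    PD (P.natDegree + 1) (fun n : ℕ => ((P.eval n : ℕ) : ℤ)) := by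
  have : (fun n : ℕ => ((P.eval n : ℕ) : ℤ)) =
      ∑ j ∈ Finset.range P.natDegree, fun n : ℕ => (P.coeff (j + 1) : ℤ) • (n : ℤ) ^ (j + 1) := by
    funext n
    rw [Polynomial.eval_eq_sum_range, Finset.sum_range_succ', h0]
    simp
  rw [this]
  refine PD_finset_sum _ _ _ fun j hj => PD_zsmul _ _ ?_
  have hj := Finset.mem_range.1 hj
  exact PD_mono (by omega) (PD_pow j)

/-- the abstract notion of a shift-invariant largeness family with the covering property -/
structure LargeFam (L : Set (Set G)) : Prop where
  shift : ∀ B ∈ L, ∀ g : G, {n | g + n ∈ B} ∈ L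
  mono : ∀ B ∈ L, ∀ B', B ⊆ B' → B' ∈ L
  cover : ∀ B ∈ L, ∃ C : Finset G, ∀ B' ∈ L, ∃ t ∈ C, {n | n ∈ B' ∧ t + n ∈ B} ∈ L

def Good (L : Set (Set G)) (x : ℕ → M) (C : Set (M → G)) : Prop :=
  ∀ Φ : Finset (M → G), (∀ φ ∈ Φ, φ ∈ C) → ∀ B ∈ L, ∀ N : ℕ,
    ∃ H : Finset ℕ, H.Nonempty ∧ (∀ t ∈ H, N < t) ∧
      {n | ∀ φ ∈ Φ, φ (∑ t ∈ H, x t) + n ∈ B} ∈ L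

lemma good_mono {L : Set (Set G)} {x : ℕ → M} {C C' : Set (M → G)} (h : C ⊆ C')
    (hg : Good L x C') : Good L x C :=
  fun Φ hΦ => hg Φ fun φ hφ => h (hΦ φ hφ)

lemma good_step {L : Set (Set G)} (hL : LargeFam L) (x : ℕ → M) {C C' : Set (M → G)}
    (hg : Good L x C') (ψ : M → G) (h0 : ∀ q ∈ C, q 0 = 0)
    (hC : ∀ q ∈ C, ∀ v, Dv v q - ψ ∈ C') : Good L x (insert 0 C) := by
  classical
  intro Φ₀ hΦ₀ B hB N
  set Φ := Φ₀.erase 0 with hΦdef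
  have hΦ : ∀ φ ∈ Φ, φ ∈ C := by
    intro φ hφ
    have h1 := hΦ₀ φ (Finset.mem_of_mem_erase hφ)
    rcases h1 with h1 | h1
    · exact absurd h1 (Finset.ne_of_mem_erase hφ)
    · exact h1
  suffices hdone : ∃ H : Finset ℕ, H.Nonempty ∧ (∀ t ∈ H, N < t) ∧
      {n | n ∈ B ∧ ∀ φ ∈ Φ, φ (∑ t ∈ H, x t) + n ∈ B} ∈ L by
    obtain ⟨H, h1, h2, h3⟩ := hdone
    refine ⟨H, h1, h2, hL.mono _ h3 _ ?_⟩
    rintro n ⟨hn, hn'⟩ φ hφ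
    by_cases hz : φ = 0
    · subst hz; simpa using hn
    · exact hn' φ (Finset.mem_erase.2 ⟨hz, hφ⟩)
  by_contra hnot
  obtain ⟨T, hT⟩ := hL.cover B hB
  have key : ∀ k : ℕ, ∃ S : Finset G, S ⊆ T ∧ S.card = k ∧ ∃ U ∈ L, ∃ K : G → Finset ℕ, ∃ N' : ℕ,
      N ≤ N' ∧ (∀ t ∈ S, ∀ i ∈ K t, N < i ∧ i ≤ N') ∧
      (∀ t ∈ S, ∀ n ∈ U, ∀ φ ∈ Φ, t + φ (∑ i ∈ K t, x i) + n ∈ B) := by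
    intro k
    induction k with
    | zero => exact ⟨∅, by simp, rfl, B, hB, fun _ => ∅, N, le_rfl, by simp, by simp⟩
    | succ k ih =>
      obtain ⟨S, hST, hSk, U, hU, K, N', hN', hK, hB'⟩ := ih
      obtain ⟨H, hH, hHN, hHL⟩ := hg
        ((Φ ×ˢ S).image fun a => Dv (∑ i ∈ K a.2, x i) a.1 - ψ)
        (by
          intro φ hφ
          obtain ⟨a, ha, rfl⟩ := Finset.mem_image.1 hφ
          exact hC _ (hΦ _ (Finset.mem_product.1 ha).1) _) U hU N'
      have h1 := hL.shift _ hHL (ψ (∑ t ∈ H, x t))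
      obtain ⟨t', ht', h2⟩ := hT _ h1
      set U' := {n | n ∈ {n | ψ (∑ t ∈ H, x t) + n ∈ {n | ∀ φ ∈ (Φ ×ˢ S).image
        fun a => Dv (∑ i ∈ K a.2, x i) a.1 - ψ, φ (∑ t ∈ H, x t) + n ∈ U}} ∧ t' + n ∈ B} with hU'
      have hdisj : ∀ t ∈ S, Disjoint (K t) H := by
        intro t ht
        rw [Finset.disjoint_left]
        intro i hi hi'
        have := (hK t ht i hi).2
        have := hHN i hi'
        omega
      have hnew : ∀ t ∈ S, ∀ n ∈ U', ∀ φ ∈ Φ, t + φ (∑ i ∈ K t ∪ H, x i) + n ∈ B := by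
        intro t ht n hn φ hφ
        have h3 := hn.1 (Dv (∑ i ∈ K t, x i) φ - ψ)
          (Finset.mem_image.2 ⟨(φ, t), Finset.mem_product.2 ⟨hφ, ht⟩, rfl⟩)
        have h4 := hB' t ht _ h3 φ hφ
        rw [Finset.sum_union (hdisj t ht)]
        convert h4 using 1
        simp only [Dv, Pi.sub_apply]
        abel
      by_cases htS : t' ∈ S
      · exfalso
        apply hnot
        refine ⟨K t' ∪ H, hH.mono Finset.subset_union_right, ?_, ?_⟩
        · intro i hi
          rcases Finset.mem_union.1 hi with hi | hi
          · exact (hK t' htS i hi).1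
          · exact lt_of_le_of_lt hN' (hHN i hi)
        · refine hL.mono _ (hL.shift _ h2 (-t')) _ ?_
          intro n hn
          have hn : -t' + n ∈ U' := hn
          refine ⟨by simpa using hn.2, fun φ hφ => ?_⟩
          have := hnew t' htS _ hn φ hφ
          convert this using 1
          abel
      · refine ⟨insert t' S, Finset.insert_subset ht' hST, by
          rw [Finset.card_insert_of_notMem htS, hSk], U', h2,
          fun t => if t = t' then ∅ else K t ∪ H, N' + H.sup id, by omega, ?_, ?_⟩
        · intro t ht i hi
          by_cases htt : t = t'
          · simp [htt] at hi
          · simp only [htt, if_false] at hi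
            have ht : t ∈ S := by
              rcases Finset.mem_insert.1 ht with h | h
              · exact absurd h htt
              · exact h
            rcases Finset.mem_union.1 hi with hi | hi
            · have := hK t ht i hi; omega
            · have h5 := hHN i hi
              have h6 : i ≤ H.sup id := Finset.le_sup (f := id) hi
              omega
        · intro t ht n hn φ hφ
          by_cases htt : t = t'
          · subst htt
            simpa [h0 φ (hΦ φ hφ)] using hn.2
          · simp only [htt, if_false]
            have ht : t ∈ S := by
              rcases Finset.mem_insert.1 ht with h | h
              · exact absurd h htt
              · exact h
            exact hnew t ht n hn φ hφ
  obtain ⟨S, hST, hSk, -⟩ := key (T.card + 1)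
  have := Finset.card_le_card hST
  omega

lemma good_claim {L : Set (Set G)} (hL : LargeFam L) (x : ℕ → M) (d : ℕ) :
    ∀ Q : Set (M → G), (∀ q ∈ Q, q 0 = 0) → (∀ q ∈ Q, ∀ r, PD d r → q + r ∈ Q) →
      (∀ q ∈ Q, ∀ v, Dv v q ∈ Q) → Good L x Q → Good L x (Q ∪ {r | PD d r}) := by
  induction d with
  | zero =>
    intro Q h0 _ hD hg
    have := good_step hL x hg 0 h0 (by simpa using hD)
    refine good_mono ?_ this
    rintro q (hq | hq)
    · exact Or.inr hq
    · exact Or.inl hq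
  | succ d ih =>
    intro Q h0 hadd hD hg
    have inner : ∀ n : ℕ, ∀ l : List (M → G), l.length = n → (∀ q ∈ l, PD (d + 1) q) →
        Good L x (Q ∪ {r | ∃ q ∈ l, PD d (r - q)}) := by
      intro n
      induction n with
      | zero =>
        intro l hl _
        have : l = [] := List.length_eq_zero_iff.1 hl
        subst this
        simpa using hg
      | succ n ihn =>
        intro l hl hlP
        match l, hl, hlP with
        | q₀ :: l, hl, hlP =>
          have hq₀ : PD (d + 1) q₀ := hlP q₀ (by simp)
          have hl' : ∀ q ∈ l, PD (d + 1) q := fun q hq => hlP q (by simp [hq])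
          have hm : ∀ q ∈ l.map (· - q₀), PD (d + 1) q := by
            intro q hq
            obtain ⟨q', hq', rfl⟩ := List.mem_map.1 hq
            exact PD_sub _ (hl' q' hq') hq₀
          have hlow : ∀ r q : M → G, PD (d + 1) q → PD d (r - q) → PD (d + 1) r := by
            intro r q h1 h2
            have := PD_add _ (PD_succ _ h2) h1
            simpa using this
          have hDlow : ∀ r q : M → G, PD (d + 1) q → PD d (r - q) → ∀ v, PD d (Dv v r - q) := by
            intro r q h1 h2 v
            have := PD_add _ (PD_Dv_sub d (hlow r q h1 h2) v) h2
            simpa using this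
          have g1 := ihn (l.map (· - q₀)) (by simpa using hl) hm
          have g2 := ih _ (by
              rintro q (hq | ⟨q', hq', hq⟩)
              · exact h0 q hq
              · exact PD_apply_zero _ (hlow q q' (hm q' hq') hq)) (by
              rintro q (hq | ⟨q', hq', hq⟩) r hr
              · exact Or.inl (hadd q hq r (PD_succ _ hr))
              · refine Or.inr ⟨q', hq', ?_⟩
                have := PD_add _ hq hr
                convert this using 1
                abel) (by
              rintro q (hq | ⟨q', hq', hq⟩) v
              · exact Or.inl (hD q hq v)
              · exact Or.inr ⟨q', hq', hDlow q q' (hm q' hq') hq v⟩) g1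
          have g3 := good_step hL x g2 (C := Q ∪ {r | ∃ q ∈ q₀ :: l, PD d (r - q)}) q₀ (by
              rintro q (hq | ⟨q', hq', hq⟩)
              · exact h0 q hq
              · exact PD_apply_zero _ (hlow q q' (hlP q' hq') hq)) (by
              rintro q (hq | ⟨q', hq', hq⟩) v
              · refine Or.inl (Or.inl ?_)
                rw [sub_eq_add_neg]
                exact hadd _ (hD q hq v) _ (PD_neg _ hq₀)
              · have h5 := hDlow q q' (hlP q' hq') hq v
                rcases List.mem_cons.1 hq' with h6 | h6
                · subst h6
                  exact Or.inr h5
                · refine Or.inl (Or.inr ⟨q' - q₀, List.mem_map.2 ⟨q', h6, rfl⟩, ?_⟩)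
                  convert h5 using 1
                  abel)
          exact good_mono (Set.subset_insert _ _) g3
    classical
    intro Φ hΦ
    refine inner _ (Φ.filter fun φ => PD (d + 1) φ).toList rfl (by simp) Φ ?_
    intro φ hφ
    rcases hΦ φ hφ with h | h
    · exact Or.inl h
    · refine Or.inr ⟨φ, ?_, ?_⟩
      · simp only [Finset.mem_toList, Finset.mem_filter]; exact ⟨hφ, h⟩
      · rw [sub_self]; exact PD_zero d

lemma good_PD {L : Set (Set G)} (hL : LargeFam L) (x : ℕ → M) (d : ℕ) :
    Good L x {r | PD d r} := by
  have := good_claim hL x d ∅ (by simp) (by simp) (by simp) (by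
    intro Φ hΦ B hB N
    refine ⟨{N + 1}, by simp, by simp, hL.mono _ hB _ ?_⟩
    intro n _ φ hφ
    exact absurd (hΦ φ hφ) (by simp))
  simpa using this

end PET
section UF
attribute [local instance] Ultrafilter.add Ultrafilter.addSemigroup

lemma mem_add_uf {M : Type*} [Add M] (U V : Ultrafilter M) (A : Set M) :
    A ∈ U + V ↔ {x | {y | x + y ∈ A} ∈ V} ∈ U := Iff.rfl

lemma mem_uAdd (p q : Ultrafilter ℕ) (A : Set ℕ) :
    A ∈ uAdd p q ↔ {x | {y | x + y ∈ A} ∈ q} ∈ p := Iff.rfl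

lemma uAdd_eq (p q : Ultrafilter ℕ) : uAdd p q = p + q := by
  ext A; rfl

/-- embedding of `βℕ` in `βℤ` -/
def toZ (p : Ultrafilter ℕ) : Ultrafilter ℤ := p.map (fun n : ℕ => (n : ℤ))

lemma mem_toZ (p : Ultrafilter ℕ) (A : Set ℤ) : A ∈ toZ p ↔ {n : ℕ | (n : ℤ) ∈ A} ∈ p := Iff.rfl

lemma toZ_add (p q : Ultrafilter ℕ) : toZ (p + q) = toZ p + toZ q := by
  ext A
  simp only [mem_toZ, mem_add_uf, Set.mem_ofPred_eq]
  push_cast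
  rfl

lemma toZ_inj {p q : Ultrafilter ℕ} (h : toZ p = toZ q) : p = q := by
  ext A
  have : ((fun n : ℕ => (n : ℤ)) '' A) ∈ toZ p ↔ ((fun n : ℕ => (n : ℤ)) '' A) ∈ toZ q := by rw [h]
  simpa [mem_toZ] using this

lemma exists_toZ {r : Ultrafilter ℤ} (h : {n : ℤ | 0 ≤ n} ∈ r) : ∃ q, toZ q = r := by
  refine ⟨r.map Int.toNat, ?_⟩
  ext A
  rw [mem_toZ, Ultrafilter.mem_map]
  constructor
  · intro hA
    filter_upwards [h, hA] with n h1 h2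
    simp only [Set.mem_preimage, Set.mem_ofPred_eq] at h1 h2
    rwa [Int.toNat_of_nonneg h1] at h2
  · intro hA
    filter_upwards [h, hA] with n h1 h2
    simp only [Set.mem_preimage, Set.mem_ofPred_eq] at h1 ⊢
    rwa [Int.toNat_of_nonneg h1]

lemma minimal_nonprincipal (p : Ultrafilter ℕ) (hp : IsMinimalIdempotent p) (N : ℕ) :
    {n | N ≤ n} ∈ p := by
  by_contra hN
  have h1 : {n | N ≤ n}ᶜ ∈ p := Ultrafilter.compl_mem_iff_notMem.2 hN
  have hfin : ({n | N ≤ n}ᶜ : Set ℕ).Finite := (Set.finite_lt_nat N).subset (by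
    intro n hn; simpa using hn)
  obtain ⟨k, -, hk⟩ := Ultrafilter.eq_pure_of_finite_mem hfin h1
  have hk0 : k = 0 := by
    have h2 : {k} ∈ uAdd p p := by
      rw [hp.1, hk]; exact Set.mem_singleton k
    rw [mem_uAdd, hk] at h2
    have : k + k = k := h2
    omega
  subst hk0
  obtain ⟨q, hq, hqq⟩ := exists_idempotent_in_compact_add_subsemigroup
    (M := Ultrafilter ℕ) Ultrafilter.continuous_add_left {q | {n | 1 ≤ n} ∈ q}
    ⟨pure 1, by show (1:ℕ) ≤ 1; omega⟩
    (ultrafilter_isClosed_basic _).isCompact (by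
      intro a ha b hb
      show {n | 1 ≤ n} ∈ a + b
      rw [mem_add_uf]
      filter_upwards [ha] with n hn
      filter_upwards [hb] with m hm
      simp only [Set.mem_ofPred_eq] at *
      omega)
  have h3 := hp.2 q (by rw [IdempotentUF, uAdd_eq]; exact hqq)
    (by
      rw [hk]; ext A; rw [mem_uAdd]
      have : ∀ x : ℕ, ({y | x + y ∈ A} ∈ (pure 0 : Ultrafilter ℕ)) ↔ x ∈ A := fun x => by
        rw [Ultrafilter.mem_pure]; simp
      simp [this])
    (by
      rw [hk]; ext A; rw [mem_uAdd]
      rw [Ultrafilter.mem_pure]; simp)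
  rw [h3, hk] at hq
  have : (1 : ℕ) ≤ 0 := hq
  omega

lemma min_left_ideal (p : Ultrafilter ℕ) (hp : IsMinimalIdempotent p) (s : Ultrafilter ℤ) :
    ∃ u, u + (s + toZ p) = toZ p := by
  have hid : toZ p + toZ p = toZ p := by
    rw [← toZ_add, ← uAdd_eq, hp.1]
  have hcomp : IsCompact (Set.range fun u : Ultrafilter ℤ => u + (s + toZ p)) :=
    isCompact_range (Ultrafilter.continuous_add_left _)
  obtain ⟨e, ⟨u, rfl⟩, he⟩ := exists_idempotent_in_compact_add_subsemigroup
    (M := Ultrafilter ℤ) Ultrafilter.continuous_add_left _ (Set.range_nonempty _) hcomp (by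
      rintro _ ⟨a, rfl⟩ _ ⟨b, rfl⟩
      exact ⟨a + (s + toZ p) + b, by simp only [add_assoc]⟩)
  simp only at he
  set e := u + (s + toZ p) with hedef
  have hep : e + toZ p = e := by rw [hedef]; simp only [add_assoc, hid]
  have hnn : {n : ℤ | 0 ≤ n} ∈ toZ p + e := by
    rw [hedef, ← add_assoc, ← add_assoc, mem_add_uf]
    refine Filter.univ_mem' fun n => ?_
    simp only [Set.mem_ofPred_eq]
    rw [mem_toZ]
    filter_upwards [minimal_nonprincipal p hp (-n).toNat] with m hm
    have hm : (-n).toNat ≤ m := hm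
    show (0 : ℤ) ≤ n + m
    omega
  obtain ⟨q, hq⟩ := exists_toZ hnn
  have h1 : q + q = q := by
    apply toZ_inj
    rw [toZ_add, hq, add_assoc, ← add_assoc e, hep, he]
  have h2 : q + p = q := by
    apply toZ_inj
    rw [toZ_add, hq, add_assoc, hep]
  have h3 : p + q = q := by
    apply toZ_inj
    rw [toZ_add, hq, ← add_assoc, hid]
  have h4 := hp.2 q (by rw [IdempotentUF, uAdd_eq, h1]) (by rw [uAdd_eq, h2]) (by rw [uAdd_eq, h3])
  refine ⟨toZ p + u, ?_⟩
  rw [add_assoc, ← hedef, ← hq, h4]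

lemma largeFam_of_minimal (p : Ultrafilter ℕ) (hp : IsMinimalIdempotent p) :
    LargeFam {B : Set ℤ | ∃ s : Ultrafilter ℤ, B ∈ s + toZ p} where
  shift := by
    rintro B ⟨s, hs⟩ g
    refine ⟨s.map (fun n => -g + n), ?_⟩
    rw [mem_add_uf, Ultrafilter.mem_map] 
    rw [mem_add_uf] at hs
    filter_upwards [hs] with n hn
    simp only [Set.mem_preimage, Set.mem_ofPred_eq] at *
    convert hn using 4
    abel
  mono := by
    rintro B ⟨s, hs⟩ B' h
    exact ⟨s, Filter.mem_of_superset hs h⟩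
  cover := by
    rintro B ⟨s, hs⟩
    have hcomp : IsCompact (Set.range fun u : Ultrafilter ℤ => u + toZ p) :=
      isCompact_range (Ultrafilter.continuous_add_left _)
    obtain ⟨C, hC⟩ := hcomp.elim_finite_subcover
      (fun t : ℤ => {r : Ultrafilter ℤ | {n | t + n ∈ B} ∈ r})
      (fun t => ultrafilter_isOpen_basic _) (by
        rintro _ ⟨v, rfl⟩
        obtain ⟨u, hu⟩ := min_left_ideal p hp v
        rw [← hu, ← add_assoc, mem_add_uf] at hs
        obtain ⟨t, ht⟩ := Ultrafilter.nonempty_of_mem hs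
        exact Set.mem_iUnion.2 ⟨t, ht⟩)
    refine ⟨C, ?_⟩
    rintro B' ⟨v, hv⟩
    have := hC ⟨v, rfl⟩
    simp only [Set.mem_iUnion] at this
    obtain ⟨t, ht, h⟩ := this
    exact ⟨t, ht, v, Filter.inter_mem hv h⟩

/-- The polynomial J-set property for members of minimal idempotents. -/
lemma poly_J (p : Ultrafilter ℕ) (hp : IsMinimalIdempotent p) (B : Set ℕ) (hB : B ∈ p)
    (F : Finset (ℕ → ℕ)) (R : Finset (ℕ → ℕ)) (hR : ∀ P ∈ R, IsPolyZeroConst P) (N : ℕ) :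
    ∃ (α : ℕ) (H : Finset ℕ), H.Nonempty ∧ (∀ t ∈ H, N < t) ∧
      ∀ f ∈ F, ∀ P ∈ R, α + P (∑ t ∈ H, f t) ∈ B := by
  classical
  have hid : toZ p + toZ p = toZ p := by
    rw [← toZ_add, ← uAdd_eq, hp.1]
  have hR' : ∃ d : ℕ, ∀ P ∈ R, PD d (fun n : ℕ => ((P n : ℕ) : ℤ)) := by
    choose! Q hQ using hR
    refine ⟨R.sup (fun P => (Q P).natDegree + 1), fun P hP => ?_⟩
    have h1 := PD_poly (Q P) (hQ P hP).1
    have h2 : (fun n : ℕ => ((P n : ℕ) : ℤ)) = fun n : ℕ => (((Q P).eval n : ℕ) : ℤ) := by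
      funext n; rw [(hQ P hP).2]
    rw [h2]
    exact PD_mono (Finset.le_sup (f := fun P => (Q P).natDegree + 1) hP) h1
  obtain ⟨d, hd⟩ := hR'
  have hgood := good_PD (largeFam_of_minimal p hp)
    (fun t : ℕ => (fun f : ℕ → ℕ => f t)) d
  obtain ⟨H, hH, hHN, s, hs⟩ := hgood
    (insert 0 ((F ×ˢ R).image fun a => fun u : (ℕ → ℕ) → ℕ => ((a.2 (u a.1) : ℕ) : ℤ)))
    (by
      intro φ hφ
      rcases Finset.mem_insert.1 hφ with h | h
      · subst h; exact PD_zero d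
      · obtain ⟨a, ha, rfl⟩ := Finset.mem_image.1 h
        exact PD_comp (Pi.evalAddMonoidHom (fun _ : ℕ → ℕ => ℕ) a.1) d
          (hd a.2 (Finset.mem_product.1 ha).2))
    ((fun n : ℕ => (n : ℤ)) '' B)
    ⟨toZ p, by rw [hid, mem_toZ]; filter_upwards [hB] with n hn; exact ⟨n, hn, rfl⟩⟩ N
  obtain ⟨n, hn⟩ := Ultrafilter.nonempty_of_mem hs
  have h0 := hn 0 (by simp)
  simp only [Pi.zero_apply, zero_add] at h0
  obtain ⟨α, hα, rfl⟩ := h0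
  refine ⟨α, H, hH, hHN, fun f hf P hP => ?_⟩
  have h1 := hn (fun u : (ℕ → ℕ) → ℕ => ((P (u f) : ℕ) : ℤ))
    (Finset.mem_insert_of_mem (Finset.mem_image.2 ⟨(f, P), Finset.mem_product.2 ⟨hf, hP⟩, rfl⟩))
  obtain ⟨b, hb, hb'⟩ := h1
  simp only [Finset.sum_apply] at hb'
  have : α + P (∑ t ∈ H, f t) = b := by
    have h2 : (b : ℤ) = ((P (∑ t ∈ H, f t) : ℕ) : ℤ) + (α : ℤ) := hb'
    omega
  rw [this]; exact hb

end UF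
section Construction

/-- linear combination with a list of coefficients -/
def lc (p : Ultrafilter ℕ) : List ℕ → Ultrafilter ℕ
  | [] => pure 0
  | b :: bs => uAdd (p.map fun x => b * x) (lc p bs)

lemma linComb_eq_lc (p : Ultrafilter ℕ) : ∀ (m : ℕ) (a : Fin m → ℕ),
    linComb m a (fun _ => p) = lc p (List.ofFn a)
  | 0, a => by simp [linComb, lc]
  | m + 1, a => by
    rw [List.ofFn_succ]
    simp only [linComb, lc]
    rw [linComb_eq_lc p m]

/-- the next target set -/
def SS (p : Ultrafilter ℕ) (A : Set ℕ) : List ℕ → ℕ → Set ℕ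
  | [], _ => Set.univ
  | b :: bs, c => {v | {y | c + b * v + y ∈ A} ∈ lc p bs}

/-- the star of a set relative to an ultrafilter -/
def star' (p : Ultrafilter ℕ) (S : Set ℕ) : Set ℕ := {v | v ∈ S ∧ {z | v + z ∈ S} ∈ p}

lemma star_mem (p : Ultrafilter ℕ) (hp : IdempotentUF p) {S : Set ℕ} (hS : S ∈ p) :
    star' p S ∈ p := by
  have h1 : S ∈ uAdd p p := by rw [hp]; exact hS
  exact Filter.inter_mem hS ((mem_uAdd p p S).1 h1)

lemma star_shift (p : Ultrafilter ℕ) (hp : IdempotentUF p) {S : Set ℕ} {v : ℕ}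
    (hv : v ∈ star' p S) : {z | v + z ∈ star' p S} ∈ p := by
  have h1 := star_mem p hp hv.2
  filter_upwards [h1] with z hz
  refine ⟨hz.1, ?_⟩
  have := hz.2
  simpa [add_assoc] using this

structure St where
  bs : List ℕ
  c : ℕ
  s : ℕ
  x : ℕ
  P : ℕ → ℕ

def St.step (st : St) (α y : ℕ) : St := ⟨st.bs, st.c, st.s + α, st.x + y, st.P⟩

def St.close (st : St) (P : ℕ → ℕ) : St :=
  ⟨st.bs.tail, st.c + st.bs.headD 0 * (st.s + st.P st.x), 0, 0, P⟩

def St.Inv (p : Ultrafilter ℕ) (A : Set ℕ) (st : St) : Prop :=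
  IsPolyZeroConst st.P ∧ {y | st.c + y ∈ A} ∈ lc p st.bs ∧
    {z | st.s + st.P st.x + z ∈ star' p (SS p A st.bs st.c)} ∈ p

lemma poly_zero {P : ℕ → ℕ} (hP : IsPolyZeroConst P) : P 0 = 0 := by
  obtain ⟨Q, h0, hQ⟩ := hP
  rw [hQ, ← Polynomial.coeff_zero_eq_eval_zero, h0]

lemma poly_shift {P : ℕ → ℕ} (hP : IsPolyZeroConst P) (x : ℕ) :
    ∃ R, IsPolyZeroConst R ∧ ∀ y, P (x + y) = P x + R y := by
  obtain ⟨Q, h0, hQ⟩ := hP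
  set W := Q.comp (Polynomial.X + Polynomial.C x) with hW
  refine ⟨fun y => (W.divX * Polynomial.X).eval y, ⟨W.divX * Polynomial.X, by simp, fun _ => rfl⟩, ?_⟩
  intro y
  have h1 : W.eval y = P (x + y) := by
    rw [hW, hQ]; simp [Polynomial.eval_comp, add_comm]
  have h2 : W.coeff 0 = P x := by
    rw [Polynomial.coeff_zero_eq_eval_zero, hW, hQ]; simp [Polynomial.eval_comp]
  have h3 := congrArg (Polynomial.eval y) (Polynomial.divX_mul_X_add W)
  rw [Polynomial.eval_add, Polynomial.eval_C, h1, h2] at h3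
  rw [← h3, add_comm]

lemma inv_start (p : Ultrafilter ℕ) (hp : IsMinimalIdempotent p) (A : Set ℕ) (bs : List ℕ)
    (c : ℕ) (P : ℕ → ℕ) (hP : IsPolyZeroConst P) (h : {y | c + y ∈ A} ∈ lc p bs) :
    St.Inv p A ⟨bs, c, 0, 0, P⟩ := by
  refine ⟨hP, h, ?_⟩
  have : SS p A bs c ∈ p := by
    cases bs with
    | nil => exact Filter.univ_mem
    | cons b bs =>
      simp only [lc] at h
      rw [mem_uAdd, Ultrafilter.mem_map] at h
      filter_upwards [h] with v hv
      simpa [SS, add_assoc] using hv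
  simpa [poly_zero hP] using star_mem p hp.1 this

lemma inv_step (p : Ultrafilter ℕ) (hp : IsMinimalIdempotent p) (A : Set ℕ) (st : St) (α y : ℕ)
    (h : st.Inv p A) (hs : st.s + α + st.P (st.x + y) ∈ star' p (SS p A st.bs st.c)) :
    (st.step α y).Inv p A :=
  ⟨h.1, h.2.1, star_shift p hp.1 hs⟩

lemma inv_close (p : Ultrafilter ℕ) (hp : IsMinimalIdempotent p) (A : Set ℕ) (st : St)
    (P : ℕ → ℕ) (hP : IsPolyZeroConst P)
    (h : st.Inv p A) (hs : st.s + st.P st.x ∈ star' p (SS p A st.bs st.c)) :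
    (st.close P).Inv p A := by
  apply inv_start p hp A _ _ P hP
  obtain ⟨bs, c, s, x, P'⟩ := st
  cases bs with
  | nil => simpa using h.2.1
  | cons b bs => exact hs.1

/-- The new states. -/
noncomputable def nexts (T : Finset (ℕ → ℕ)) (α : ℕ) (H : Finset ℕ) (F : Finset (ℕ → ℕ))
    (past : Finset St) : Finset St := by
  classical
  exact ((past ×ˢ F).image fun a => a.1.step α (∑ t ∈ H, a.2 t)) ∪
    (((past ×ˢ F) ×ˢ T).image fun a => (a.1.1.step α (∑ t ∈ H, a.1.2 t)).close a.2)

noncomputable def pastS (init : Finset St) (F : Finset (ℕ → ℕ))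
    (g : Finset (ℕ → ℕ) → ℕ × Finset ℕ × Finset St) : Finset St := by
  classical
  exact init ∪ F.ssubsets.biUnion fun G => (g G).2.2

lemma step_exists (p : Ultrafilter ℕ) (hp : IsMinimalIdempotent p) (A : Set ℕ)
    (past : Finset St) (F : Finset (ℕ → ℕ)) (N : ℕ) :
    ∃ (α : ℕ) (H : Finset ℕ), H.Nonempty ∧ (∀ t ∈ H, N < t) ∧
      ∀ st ∈ past, st.Inv p A → ∀ f ∈ F,
        st.s + α + st.P (st.x + ∑ t ∈ H, f t) ∈ star' p (SS p A st.bs st.c) := by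
  classical
  have hR : ∀ st : St, ∃ R, st.Inv p A →
      (IsPolyZeroConst R ∧ ∀ y, st.P (st.x + y) = st.P st.x + R y) := by
    intro st
    by_cases h : st.Inv p A
    · obtain ⟨R, h1⟩ := poly_shift h.1 st.x
      exact ⟨R, fun _ => h1⟩
    · exact ⟨id, fun h' => absurd h' h⟩
  choose R hR using hR
  set past' := past.filter fun st => st.Inv p A
  have hB : (⋂ st ∈ past', {z | st.s + st.P st.x + z ∈ star' p (SS p A st.bs st.c)}) ∈ p := by
    refine (Filter.biInter_finset_mem past').2 fun st hst => ?_
    exact (Finset.mem_filter.1 hst).2.2.2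
  obtain ⟨α, H, h1, h2, h3⟩ := poly_J p hp _ hB F (past'.image R) (by
    intro P hP
    obtain ⟨st, hst, rfl⟩ := Finset.mem_image.1 hP
    exact (hR st (Finset.mem_filter.1 hst).2).1) N
  refine ⟨α, H, h1, h2, fun st hst hinv f hf => ?_⟩
  have hst' : st ∈ past' := Finset.mem_filter.2 ⟨hst, hinv⟩
  have h4 := h3 f hf (R st) (Finset.mem_image_of_mem _ hst')
  have h5 := Set.mem_iInter₂.1 h4 st hst'
  rw [(hR st hinv).2]
  have h6 : st.s + st.P st.x + (α + R st (∑ t ∈ H, f t)) ∈ star' p (SS p A st.bs st.c) := h5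
  convert h6 using 1
  ring

lemma exists_construction (p : Ultrafilter ℕ) (hp : IsMinimalIdempotent p) (A : Set ℕ)
    (T : Finset (ℕ → ℕ)) (hTP : ∀ P ∈ T, IsPolyZeroConst P) (init : Finset St)
    (hinit : ∀ st ∈ init, St.Inv p A st) :
    ∃ Φ : Finset (ℕ → ℕ) → ℕ × Finset ℕ × Finset St,
      (∀ F, (Φ F).2.1.Nonempty) ∧
      (∀ F G, F ⊂ G → ∀ x ∈ (Φ F).2.1, ∀ y ∈ (Φ G).2.1, x < y) ∧
      (∀ F, (Φ F).2.2 = nexts T (Φ F).1 (Φ F).2.1 F (pastS init F Φ)) ∧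
      (∀ F, ∀ st ∈ pastS init F Φ, st.Inv p A) := by
  classical
  have hex : ∀ (F : Finset (ℕ → ℕ)) (g : Finset (ℕ → ℕ) → ℕ × Finset ℕ × Finset St),
      ∃ o : ℕ × Finset ℕ × Finset St, o.2.1.Nonempty ∧
        (∀ G, G ⊂ F → ∀ x ∈ (g G).2.1, ∀ y ∈ o.2.1, x < y) ∧
        o.2.2 = nexts T o.1 o.2.1 F (pastS init F g) ∧
        (∀ st ∈ pastS init F g, st.Inv p A → ∀ f ∈ F,
          st.s + o.1 + st.P (st.x + ∑ t ∈ o.2.1, f t) ∈ star' p (SS p A st.bs st.c)) := by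
    intro F g
    obtain ⟨α, H, h1, h2, h3⟩ := step_exists p hp A (pastS init F g) F
      (F.ssubsets.sup fun G => (g G).2.1.sup id)
    refine ⟨(α, H, nexts T α H F (pastS init F g)), h1, ?_, rfl, h3⟩
    intro G hG x hx y hy
    have h4 : x ≤ (g G).2.1.sup id := Finset.le_sup (f := id) hx
    have h5 : (g G).2.1.sup id ≤ F.ssubsets.sup fun G => (g G).2.1.sup id :=
      Finset.le_sup (f := fun G => (g G).2.1.sup id) (Finset.mem_ssubsets.2 hG)
    have h6 := h2 y hy
    omega
  choose o ho using hex
  have wf : WellFounded (fun G F : Finset (ℕ → ℕ) => G ⊂ F) := Finset.isWellFounded_ssubset.wf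
  let Φ : Finset (ℕ → ℕ) → ℕ × Finset ℕ × Finset St :=
    wf.fix (fun F rec => o F (fun G => if h : G ⊂ F then rec G h else (0, ∅, ∅)))
  have hΦ : ∀ F, Φ F = o F (fun G => if G ⊂ F then Φ G else (0, ∅, ∅)) := by
    intro F
    have := wf.fix_eq (fun F (rec : ∀ G, G ⊂ F → ℕ × Finset ℕ × Finset St) =>
      o F (fun G => if h : G ⊂ F then rec G h else (0, ∅, ∅))) F
    simpa only [dite_eq_ite] using this
  have hpast : ∀ F, pastS init F (fun G => if G ⊂ F then Φ G else (0, ∅, ∅)) = pastS init F Φ := by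
    intro F
    unfold pastS
    congr 1
    refine Finset.biUnion_congr rfl fun G hG => ?_
    simp only [if_pos (Finset.mem_ssubsets.1 hG)]
  have h1 : ∀ F, (Φ F).2.2 = nexts T (Φ F).1 (Φ F).2.1 F (pastS init F Φ) := by
    intro F
    have := (ho F (fun G => if G ⊂ F then Φ G else (0, ∅, ∅))).2.2.1
    rw [← hΦ, hpast] at this
    exact this
  have h2 : ∀ F, ∀ st ∈ pastS init F Φ, st.Inv p A → ∀ f ∈ F,
      st.s + (Φ F).1 + st.P (st.x + ∑ t ∈ (Φ F).2.1, f t) ∈ star' p (SS p A st.bs st.c) := by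
    intro F
    have := (ho F (fun G => if G ⊂ F then Φ G else (0, ∅, ∅))).2.2.2
    rw [← hΦ, hpast] at this
    exact this
  have h3 : ∀ F, ∀ st ∈ (Φ F).2.2, st.Inv p A := by
    intro F
    induction F using Finset.strongInduction with
    | H F ih =>
      have hp' : ∀ st ∈ pastS init F Φ, st.Inv p A := by
        intro st hst
        rcases Finset.mem_union.1 hst with h | h
        · exact hinit st h
        · obtain ⟨G, hG, h⟩ := Finset.mem_biUnion.1 h
          exact ih G (Finset.mem_ssubsets.1 hG) st h
      intro st hst
      rw [h1] at hst
      rcases Finset.mem_union.1 hst with h | h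
      · obtain ⟨a, ha, rfl⟩ := Finset.mem_image.1 h
        have ha := Finset.mem_product.1 ha
        exact inv_step p hp A _ _ _ (hp' _ ha.1) (h2 F _ ha.1 (hp' _ ha.1) _ ha.2)
      · obtain ⟨a, ha, rfl⟩ := Finset.mem_image.1 h
        have ha0 := Finset.mem_product.1 ha
        have ha := Finset.mem_product.1 ha0.1
        have h4 := h2 F _ ha.1 (hp' _ ha.1) _ ha.2
        exact inv_close p hp A _ _ (hTP _ ha0.2)
          (inv_step p hp A _ _ _ (hp' _ ha.1) h4) h4
  refine ⟨Φ, ?_, ?_, h1, ?_⟩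
  · intro F
    rw [hΦ]; exact (ho F _).1
  · intro F G hFG
    have := (ho G (fun G' => if G' ⊂ G then Φ G' else (0, ∅, ∅))).2.1 F hFG
    rw [← hΦ, if_pos hFG] at this
    exact this
  · intro F st hst
    rcases Finset.mem_union.1 hst with h | h
    · exact hinit st h
    · obtain ⟨G, hG, h⟩ := Finset.mem_biUnion.1 h
      exact h3 G st h

/-- state available strictly before stage `n` of the chain -/
def Avail (init : Finset St) (Φ : Finset (ℕ → ℕ) → ℕ × Finset ℕ × Finset St)
    (G : ℕ → Finset (ℕ → ℕ)) (n : ℕ) (st : St) : Prop :=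
  st ∈ init ∨ ∃ j < n, st ∈ (Φ (G j)).2.2

lemma avail_past {init : Finset St} {Φ : Finset (ℕ → ℕ) → ℕ × Finset ℕ × Finset St}
    {G : ℕ → Finset (ℕ → ℕ)} (hGs : ∀ i j, i < j → G i ⊂ G j) {n : ℕ} {st : St}
    (h : Avail init Φ G n st) : st ∈ pastS init (G n) Φ := by
  classical
  rcases h with h | ⟨j, hj, h⟩
  · exact Finset.mem_union_left _ h
  · exact Finset.mem_union_right _
      (Finset.mem_biUnion.2 ⟨G j, Finset.mem_ssubsets.2 (hGs j n hj), h⟩)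

lemma avail_mono {init : Finset St} {Φ : Finset (ℕ → ℕ) → ℕ × Finset ℕ × Finset St}
    {G : ℕ → Finset (ℕ → ℕ)} {n n' : ℕ} (hn : n ≤ n') {st : St}
    (h : Avail init Φ G n st) : Avail init Φ G n' st := by
  rcases h with h | ⟨j, hj, h⟩
  · exact Or.inl h
  · exact Or.inr ⟨j, by omega, h⟩

lemma block_run (T : Finset (ℕ → ℕ)) (init : Finset St)
    (Φ : Finset (ℕ → ℕ) → ℕ × Finset ℕ × Finset St)
    (hΦ3 : ∀ F, (Φ F).2.2 = nexts T (Φ F).1 (Φ F).2.1 F (pastS init F Φ))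
    (G : ℕ → Finset (ℕ → ℕ)) (hGs : ∀ i j, i < j → G i ⊂ G j)
    (f : ℕ → ℕ → ℕ) (hf : ∀ i, f i ∈ G i) (N : ℕ) (st : St) (hst : Avail init Φ G N st)
    (β : Finset ℕ) :
    (∀ i ∈ β, N ≤ i) → β.Nonempty → ∀ n, (∀ i ∈ β, i < n) →
      Avail init Φ G n (st.step (∑ i ∈ β, (Φ (G i)).1) (∑ i ∈ β, ∑ t ∈ (Φ (G i)).2.1, f i t)) ∧
      ∀ P ∈ T, Avail init Φ G n ((st.step (∑ i ∈ β, (Φ (G i)).1)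
        (∑ i ∈ β, ∑ t ∈ (Φ (G i)).2.1, f i t)).close P) := by
  classical
  induction β using Finset.induction_on_max with
  | empty => intro _ h; simp at h
  | insert a β hmax ih =>
    intro hN _ n hn
    have ha : a ∉ β := fun h => lt_irrefl _ (hmax a h)
    have hav : Avail init Φ G a (st.step (∑ i ∈ β, (Φ (G i)).1)
        (∑ i ∈ β, ∑ t ∈ (Φ (G i)).2.1, f i t)) := by
      by_cases hβ : β.Nonempty
      · exact (ih (fun i hi => hN i (by simp [hi])) hβ a hmax).1
      · rw [Finset.not_nonempty_iff_eq_empty] at hβ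
        subst hβ
        exact avail_mono (hN a (by simp)) hst
    have hpast := avail_past hGs hav
    have heq : st.step (∑ i ∈ insert a β, (Φ (G i)).1)
          (∑ i ∈ insert a β, ∑ t ∈ (Φ (G i)).2.1, f i t) =
        (st.step (∑ i ∈ β, (Φ (G i)).1) (∑ i ∈ β, ∑ t ∈ (Φ (G i)).2.1, f i t)).step
          (Φ (G a)).1 (∑ t ∈ (Φ (G a)).2.1, f a t) := by
      simp only [St.step, Finset.sum_insert ha, St.mk.injEq, true_and, and_true]
      constructor <;> ring
    rw [heq]
    refine ⟨Or.inr ⟨a, hn a (by simp), ?_⟩, fun P hP => Or.inr ⟨a, hn a (by simp), ?_⟩⟩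
    · rw [hΦ3]
      exact Finset.mem_union_left _ (Finset.mem_image.2
        ⟨(_, f a), Finset.mem_product.2 ⟨hpast, hf a⟩, rfl⟩)
    · rw [hΦ3]
      exact Finset.mem_union_right _ (Finset.mem_image.2
        ⟨((_, f a), P), Finset.mem_product.2 ⟨Finset.mem_product.2 ⟨hpast, hf a⟩, hP⟩, rfl⟩)

lemma final_run (p : Ultrafilter ℕ) (A : Set ℕ) (T : Finset (ℕ → ℕ)) (hT : T.Nonempty)
    (init : Finset St) (Φ : Finset (ℕ → ℕ) → ℕ × Finset ℕ × Finset St)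
    (hΦ3 : ∀ F, (Φ F).2.2 = nexts T (Φ F).1 (Φ F).2.1 F (pastS init F Φ))
    (hΦ4 : ∀ F, ∀ st ∈ pastS init F Φ, st.Inv p A)
    (G : ℕ → Finset (ℕ → ℕ)) (hGs : ∀ i j, i < j → G i ⊂ G j)
    (f : ℕ → ℕ → ℕ) (hf : ∀ i, f i ∈ G i) (m : ℕ) :
    ∀ (a : Fin m → ℕ) (P : Fin m → ℕ → ℕ) (_ : ∀ l, P l ∈ T)
      (β : Fin m → Finset ℕ) (_ : ∀ l, (β l).Nonempty)
      (_ : ∀ l l' : Fin m, l < l' → ∀ x ∈ β l, ∀ y ∈ β l', x < y)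
      (c N : ℕ) (_ : ∀ l, ∀ i ∈ β l, N ≤ i)
      (_ : ∀ P0 ∈ T, Avail init Φ G N ⟨List.ofFn a, c, 0, 0, P0⟩),
      c + ∑ l : Fin m, a l * ((∑ i ∈ β l, (Φ (G i)).1) +
              P l (∑ i ∈ β l, ∑ t ∈ (Φ (G i)).2.1, f i t)) ∈ A := by
  induction m with
  | zero =>
    intro a P hP β hβ hβs c N hN hav
    obtain ⟨P0, hP0⟩ := hT
    have := (hΦ4 _ _ (avail_past hGs (hav P0 hP0))).2.1
    simp only [List.ofFn_zero, lc] at this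
    rw [Ultrafilter.mem_pure] at this
    simpa using this
  | succ m ih =>
    intro a P hP β hβ hβs c N hN hav
    have h1 := (block_run T init Φ hΦ3 G hGs f hf N _ (hav (P 0) (hP 0)) (β 0) (hN 0) (hβ 0)
      ((β 0).sup id + 1) (fun i hi => Nat.lt_succ_of_le (Finset.le_sup (f := id) hi))).2
    rw [Fin.sum_univ_succ, ← add_assoc]
    refine ih (fun l => a l.succ) (fun l => P l.succ) (fun l => hP _) (fun l => β l.succ)
      (fun l => hβ _) (fun l l' hl => hβs _ _ (Fin.succ_lt_succ_iff.2 hl)) _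
      ((β 0).sup id + 1) ?_ ?_
    · intro l i hi
      obtain ⟨j, hj, hj'⟩ := Finset.exists_mem_eq_sup (β 0) (hβ 0) id
      have := hβs 0 l.succ (Fin.succ_pos l) j hj i hi
      simp only [id] at hj'
      omega
    · intro P0 hP0
      have h2 := h1 P0 hP0
      simpa [St.step, St.close, List.ofFn_succ] using h2

end Construction

/-- Polynomial-image extension of the linear-combination polynomial central sets theorem,
single minimal idempotent. -/
theorem image_linear_comb_polynomial_CST_I (m : ℕ) (hm : 1 ≤ m)
    (h : ℕ → ℕ) (hh : IsPolyZeroConst h) (a : Fin m → ℕ)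
    (p : Ultrafilter ℕ) (hp : IsMinimalIdempotent p)
    (A : Set ℕ) (hA : A ∈ (linComb m a fun _ => p).map h)
    (T : Finset (ℕ → ℕ)) (hT : T.Nonempty) (hTP : ∀ P ∈ T, IsPolyZeroConst P) :
    ∃ (α : Finset (ℕ → ℕ) → ℕ) (H : Finset (ℕ → ℕ) → Finset ℕ),
      (∀ F : Finset (ℕ → ℕ), F.Nonempty → (H F).Nonempty) ∧
      (∀ F G : Finset (ℕ → ℕ), F.Nonempty → F ⊂ G →
        ∀ x ∈ H F, ∀ y ∈ H G, x < y) ∧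
      (∀ G : ℕ → Finset (ℕ → ℕ),
        (∀ i, (G i).Nonempty) → (∀ i j, i < j → G i ⊂ G j) →
        ∀ f : ℕ → ℕ → ℕ, (∀ i, f i ∈ G i) →
        ∀ P : Fin m → ℕ → ℕ, (∀ l, P l ∈ T) →
        ∀ β : Fin m → Finset ℕ,
          (∀ l, (β l).Nonempty) →
          (∀ l l' : Fin m, l < l' → ∀ x ∈ β l, ∀ y ∈ β l', x < y) →
          h (∑ l : Fin m, a l * ((∑ i ∈ β l, α (G i)) +
              P l (∑ i ∈ β l, ∑ t ∈ H (G i), f i t))) ∈ A) := by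
  classical
  obtain ⟨Φ, hΦ1, hΦ2, hΦ3, hΦ4⟩ := exists_construction p hp (h ⁻¹' A) T hTP
    (T.image fun P => ⟨List.ofFn a, 0, 0, 0, P⟩) (by
      intro st hst
      obtain ⟨P, hP, rfl⟩ := Finset.mem_image.1 hst
      refine inv_start p hp _ _ _ _ (hTP P hP) ?_
      rw [← linComb_eq_lc]
      simp only [zero_add]
      exact hA)
  refine ⟨fun F => (Φ F).1, fun F => (Φ F).2.1, fun F _ => hΦ1 F, fun F G _ hFG => hΦ2 F G hFG, ?_⟩
  intro G hG hGs f hf P hP β hβ hβs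
  have := final_run p (h ⁻¹' A) T hT _ Φ hΦ3 hΦ4 G hGs f hf m a P hP β hβ hβs 0 0
    (fun _ _ _ => Nat.zero_le _) (fun P0 hP0 => Or.inl (Finset.mem_image.2 ⟨P0, hP0, rfl⟩))
  simpa using this

end MultiCST
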